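/- Let 1 ≤ k < ℓ, let T be a labelled tree on {1,…,k} and let v ∈ {1,…,k}. Then the number of labelled trees T' on {1,…,ℓ} such that the subgraph of T' induced by {1,…,k} equals T, exactly one edge of T' joins {1,…,k} to {k+1,…,ℓ}, and that edge is incident to v, equals (ℓ−k)^{ℓ−k−1}. -/

import Mathlib

/-!
Hanging the new vertices `W = {k+1,…,ℓ}` from `v` and sending each of them to its neighbour closer
to `v` turns a supertree into a parent function `W → W ⊕ Unit`, where `inr ()` stands for `v`. This
is a bijection onto the rooted forest structures (parent functions without cycles) in which
exactly one vertex has parent `v`: see `superGraph_isTree`, `superGraph_injective` and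
`superGraph_surjective`.

Forests `V → V ⊕ R` with `|V| = n` and `|R| = r` are counted by `r (n + r) ^ (n - 1)`
(`forestCount_eq`). Sort them by the set `S` of vertices whose parent lies in `R`: such a forest
amounts to an arbitrary map `S → R` and a forest on the complement of `S` with root set `S`
(`card_forest_with_layer`). The resulting recursion is solved by the binomial theorem
(`forestFormula_rec`). Restricting the same decomposition to `|S| = 1`, with one root, gives
`n * n ^ (n - 2) = n ^ (n - 1)` forests (`card_forest_one_root`).
-/

open Finset

/-! ### Rooted forests as parent functions -/

/-- A parent function `f` on `V` with values in `V` or in a set `R` of additional roots describes a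
rooted forest. Acyclicity is expressed by a rank that drops strictly from a vertex to its parent. -/
def IsRootedForest {V R : Type} (f : V → V ⊕ R) : Prop :=
  ∃ h : V → ℕ, ∀ x y, f x = Sum.inl y → h y < h x

open Classical in
/-- The vertices whose parent is one of the roots. -/
noncomputable def rootLayer {V R : Type} [Fintype V] (f : V → V ⊕ R) : Finset V :=
  Finset.univ.filter fun x => (f x).isRight = true

theorem mem_rootLayer {V R : Type} [Fintype V] (f : V → V ⊕ R) (x : V) :
    x ∈ rootLayer f ↔ ∃ r, f x = Sum.inr r := by
  simp [rootLayer, Sum.isRight_iff]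

open Classical in
/-- The parent function whose root layer is `S`, attached to the roots by `g`, while the remaining
vertices form the structure `q` with `S` as its set of roots. -/
noncomputable def glue {V R : Type} (S : Finset V)
    (g : S → R) (q : {x // x ∉ S} → {x // x ∉ S} ⊕ S) : V → V ⊕ R := fun x =>
  if hx : x ∈ S then Sum.inr (g ⟨x, hx⟩)
  else Sum.inl (Sum.elim Subtype.val Subtype.val (q ⟨x, hx⟩))

theorem rootLayer_glue {V R : Type} [Fintype V] (S : Finset V)
    (g : S → R) (q : {x // x ∉ S} → {x // x ∉ S} ⊕ S) : rootLayer (glue S g q) = S := by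
  ext x
  rw [mem_rootLayer]
  by_cases hx : x ∈ S <;> simp [glue, hx]

theorem elim_val_injective {V : Type} (S : Finset V) :
    Function.Injective (Sum.elim Subtype.val Subtype.val : {x // x ∉ S} ⊕ S → V) := by
  rintro (⟨a, ha⟩ | ⟨a, ha⟩) (⟨b, hb⟩ | ⟨b, hb⟩) h <;> simp at h <;> subst h <;>
    first | rfl | contradiction

theorem isRootedForest_glue {V R : Type} (S : Finset V)
    (g : S → R) (q : {x // x ∉ S} → {x // x ∉ S} ⊕ S) :
    IsRootedForest (glue S g q) ↔ IsRootedForest q := by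
  classical
  constructor
  · rintro ⟨h, hh⟩
    refine ⟨fun x => h x, fun x y hxy => hh x y ?_⟩
    simp [glue, x.2, hxy]
  · rintro ⟨h, hh⟩
    refine ⟨fun x => if hx : x ∈ S then 0 else h ⟨x, hx⟩ + 1, fun x y hxy => ?_⟩
    by_cases hx : x ∈ S
    · simp [glue, hx] at hxy
    · simp only [glue, hx, dite_false, Sum.inl.injEq] at hxy
      rcases hq : q ⟨x, hx⟩ with z | z
      · rw [hq] at hxy
        obtain rfl : z.1 = y := hxy
        simpa [hx, z.2] using hh _ _ hq
      · rw [hq] at hxy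
        obtain rfl : z.1 = y := hxy
        simp [hx, z.2]

/-- The number of rooted forests on `V` with root set `R`. -/
noncomputable def forestCount (V R : Type) : ℕ := Nat.card {f : V → V ⊕ R // IsRootedForest f}

/-- Every forest with root layer `S` is `glue S g q` for unique `g` and `q`. -/
theorem card_forest_with_layer {V R : Type} [Fintype V] [Fintype R] (S : Finset V) :
    Nat.card {f : V → V ⊕ R // IsRootedForest f ∧ rootLayer f = S} =
      Fintype.card R ^ S.card * forestCount {x // x ∉ S} S := by
  classical
  have e : Nat.card ((S → R) × {q : {x // x ∉ S} → {x // x ∉ S} ⊕ S // IsRootedForest q}) =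
      Nat.card {f : V → V ⊕ R // IsRootedForest f ∧ rootLayer f = S} := by
    refine Nat.card_congr (Equiv.ofBijective (fun t => ⟨glue S t.1 t.2.1,
      (isRootedForest_glue _ _ _).2 t.2.2, rootLayer_glue _ _ _⟩) ⟨?_, ?_⟩)
    · rintro ⟨g, q, hq⟩ ⟨g', q', hq'⟩ h
      have h := congrFun (congrArg Subtype.val h)
      simp only [Prod.mk.injEq, Subtype.mk.injEq]
      constructor
      · funext x
        simpa [glue] using h x
      · funext x
        have := h x
        simp only [glue, x.2, dite_false, Sum.inl.injEq] at this
        exact elim_val_injective S this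
    · rintro ⟨f, hf, hS⟩
      have h1 : ∀ x : S, ∃ r, f x = Sum.inr r := fun x =>
        (mem_rootLayer f x).1 (hS ▸ x.2)
      have h2 : ∀ x : {x // x ∉ S}, ∃ z : {x // x ∉ S} ⊕ S,
          f x = Sum.inl (Sum.elim Subtype.val Subtype.val z) := by
        intro x
        rcases hx : f x with y | r
        · by_cases hy : y ∈ S
          · exact ⟨Sum.inr ⟨y, hy⟩, rfl⟩
          · exact ⟨Sum.inl ⟨y, hy⟩, rfl⟩
        · exact absurd (hS ▸ (mem_rootLayer f x).2 ⟨r, hx⟩) x.2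
      choose g hg using h1
      choose q hq using h2
      have : glue S g q = f := by
        funext x
        by_cases hx : x ∈ S
        · simp [glue, hx, hg ⟨x, hx⟩]
        · simp only [glue, hx, dite_false]
          exact (hq ⟨x, hx⟩).symm
      exact ⟨(g, ⟨q, (isRootedForest_glue S g q).1 (this ▸ hf)⟩), Subtype.ext this⟩
  rw [← e, Nat.card_prod, forestCount]
  simp

theorem card_forest_eq_sum {V R : Type} [Fintype V] [Fintype R] (P : Finset V → Prop)
    [DecidablePred P] :
    Nat.card {f : V → V ⊕ R // IsRootedForest f ∧ P (rootLayer f)} =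
      ∑ S : Finset V with P S, Fintype.card R ^ S.card * forestCount {x // x ∉ S} S := by
  classical
  simp_rw [← card_forest_with_layer, Nat.card_eq_fintype_card, Fintype.card_subtype]
  rw [card_eq_sum_card_fiberwise (f := rootLayer) (t := ({S | P S} : Finset (Finset V)))]
  · refine sum_congr rfl fun S hS => congrArg _ ?_
    ext f
    simp only [mem_filter, mem_univ, true_and] at hS ⊢
    constructor
    · rintro ⟨⟨h, -⟩, h'⟩
      exact ⟨h, h'⟩
    · rintro ⟨h, rfl⟩
      exact ⟨⟨h, hS⟩, rfl⟩
  · intro f hf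
    simp_all

/-- The closed form `r (n + r) ^ (n - 1)`, with value `1` at `n = 0`. -/
def forestFormula : ℕ → ℕ → ℕ
  | 0, _ => 1
  | n + 1, r => r * (n + 1 + r) ^ n

/-- The recursion obtained by choosing the root layer, here of size `m`. It reduces to the binomial
theorem through `(n + 1).choose (j + 1) * (j + 1) = (n + 1) * n.choose j`. -/
theorem forestFormula_rec (n r : ℕ) :
    forestFormula (n + 1) r =
      ∑ m ∈ range (n + 1 + 1), (n + 1).choose m * (r ^ m * forestFormula (n + 1 - m) m) := by
  rw [sum_range_succ']
  have h0 : forestFormula (n + 1 - 0) 0 = 0 := zero_mul _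
  have hs : forestFormula (n + 1) r = r * (n + 1 + r) ^ n := rfl
  rw [h0, hs, mul_zero, mul_zero, add_zero]
  rw [add_comm (n + 1) r, add_pow, mul_sum]
  refine sum_congr rfl fun j hj => ?_
  obtain ⟨d, rfl⟩ : ∃ d, n = j + d := ⟨n - j, by grind⟩
  rcases d with _ | d
  · simp [pow_succ', forestFormula]
  · have h := Nat.add_one_mul_choose_eq (j + (d + 1)) j
    have e1 : j + (d + 1) + 1 - (j + 1) = d + 1 := by omega
    have e2 : j + (d + 1) - j = d + 1 := by omega
    have e3 : d + 1 + (j + 1) = j + (d + 1) + 1 := by omega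
    have e4 : forestFormula (d + 1) (j + 1) = (j + 1) * (d + 1 + (j + 1)) ^ d := rfl
    rw [e1, e2, e4, e3, Nat.cast_id]
    calc _ = r ^ (j + 1) * (j + (d + 1) + 1) ^ d * ((j + (d + 1) + 1) * (j + (d + 1)).choose j) := by
          ring
      _ = _ := by rw [h]; ring

theorem forestCount_eq (n : ℕ) : ∀ (V R : Type) [Fintype V] [Fintype R], Fintype.card V = n →
    forestCount V R = forestFormula n (Fintype.card R) := by
  classical
  induction n using Nat.strong_induction_on with
  | _ n ih =>
  intro V R _ _ hV
  rcases n with _ | n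
  · have := Fintype.card_eq_zero_iff.1 hV
    have : Nonempty {f : V → V ⊕ R // IsRootedForest f} :=
      ⟨⟨isEmptyElim, fun _ => 0, fun x => isEmptyElim x⟩⟩
    exact Nat.card_unique
  · have h := card_forest_eq_sum (V := V) (R := R) (fun _ => True)
    simp only [and_true, filter_true] at h
    rw [forestCount, h, forestFormula_rec, ← powerset_univ]
    have key : ∀ S ∈ (univ : Finset V).powerset,
        Fintype.card R ^ S.card * forestCount {x // x ∉ S} S =
        Fintype.card R ^ S.card * forestFormula (n + 1 - S.card) S.card := by
      intro S _
      congr 1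
      have hc : Fintype.card {x // x ∉ S} = n + 1 - S.card := by
        rw [← hV, Fintype.card_subtype_compl]; simp
      rcases S.eq_empty_or_nonempty with rfl | hS
      -- With no roots, a vertex of minimal rank could not have a parent.
      · simp only [card_empty, Nat.sub_zero, forestFormula, zero_mul]
        refine @Nat.card_of_isEmpty _ ⟨?_⟩
        rintro ⟨f, h, hh⟩
        have hne : Nonempty {x // x ∉ (∅ : Finset V)} := by
          rw [← Fintype.card_pos_iff, hc]; simp
        obtain ⟨x, hx⟩ := Finite.exists_min h
        rcases hy : f x with y | y
        · exact (hh x y hy).not_ge (hx y)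
        · exact absurd y.2 (notMem_empty _)
      · rw [ih (n + 1 - S.card) (by have := hS.card_pos; omega) _ _ hc]
        simp
    rw [sum_congr rfl key, sum_powerset_apply_card
      (fun m => Fintype.card R ^ m * forestFormula (n + 1 - m) m)]
    simp [hV]

/-- There are `n` choices for the root layer and `n ^ (n - 2)` forests above each of
them, read as `1` when `n = 1`. -/
theorem card_forest_one_root {V : Type} [Fintype V] [Nonempty V] :
    Nat.card {f : V → V ⊕ Unit // IsRootedForest f ∧ (rootLayer f).card = 1} =
      Fintype.card V ^ (Fintype.card V - 1) := by
  classical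
  rw [card_forest_eq_sum (fun S => S.card = 1)]
  have key : ∀ S ∈ ({S | S.card = 1} : Finset (Finset V)),
      Fintype.card Unit ^ S.card * forestCount {x // x ∉ S} S =
        forestFormula (Fintype.card V - 1) 1 := by
    intro S hS
    have hS : S.card = 1 := by simpa using hS
    rw [forestCount_eq (Fintype.card V - 1) _ _ (by rw [Fintype.card_subtype_compl]; simp [hS])]
    simp [hS]
  rw [sum_congr rfl key, sum_const, univ_filter_card_eq, card_powersetCard]
  obtain ⟨n, hn⟩ : ∃ n, Fintype.card V = n + 1 := ⟨Fintype.card V - 1, by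
    have := Fintype.card_pos (α := V); omega⟩
  rw [card_univ, hn]
  rcases n with _ | n
  · simp [forestFormula]
  · simp [forestFormula, pow_succ, mul_comm]

/-! ### Supertrees from parent functions -/

theorem card_new {k l : ℕ} (hkl : k < l) :
    Fintype.card {x : Fin l // ¬ (x : ℕ) < k} = l - k := by
  have : Fintype.card (Fin k) = Fintype.card {x : Fin l // (x : ℕ) < k} :=
    Fintype.card_congr (Fin.castLEquiv hkl.le)
  rw [Fintype.card_subtype_compl, ← this]
  simp

/-- The vertex of the big graph that a parent value stands for: `inr ()` is the vertex `v`. -/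
def hang {k l : ℕ} (hkl : k < l) (v : Fin k) :
    {x : Fin l // ¬ (x : ℕ) < k} ⊕ Unit → Fin l :=
  Sum.elim Subtype.val fun _ => Fin.castLE hkl.le v

/-- The graph on `Fin l` made of the edges of `T` and of an edge from each new vertex to its parent
under `f`. -/
def superGraph {k l : ℕ} (hkl : k < l) (T : SimpleGraph (Fin k)) (v : Fin k)
    (f : {x : Fin l // ¬ (x : ℕ) < k} → {x : Fin l // ¬ (x : ℕ) < k} ⊕ Unit) :
    SimpleGraph (Fin l) :=
  SimpleGraph.fromEdgeSet
    (Sym2.map (Fin.castLE hkl.le) '' T.edgeSet ∪ Set.range fun x => s(x.1, hang hkl v (f x)))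

section
variable {k l : ℕ} (hkl : k < l) (T : SimpleGraph (Fin k)) (v : Fin k)
  (f : {x : Fin l // ¬ (x : ℕ) < k} → {x : Fin l // ¬ (x : ℕ) < k} ⊕ Unit)

theorem hang_ne (hf : IsRootedForest f) (x : {x : Fin l // ¬ (x : ℕ) < k}) :
    x.1 ≠ hang hkl v (f x) := by
  obtain ⟨h, hh⟩ := hf
  intro hx
  rcases hy : f x with y | y
  · rw [hy] at hx
    obtain rfl : x = y := Subtype.ext hx
    exact (hh _ _ hy).ne rfl
  · rw [hy] at hx
    apply x.2
    rw [hx]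
    exact v.2

theorem superGraph_adj_old (i j : Fin k) :
    (superGraph hkl T v f).Adj (Fin.castLE hkl.le i) (Fin.castLE hkl.le j) ↔ T.Adj i j := by
  have hinj : Function.Injective (Sym2.map (Fin.castLE hkl.le)) :=
    Sym2.map.injective (Fin.castLE_injective hkl.le)
  rw [superGraph, SimpleGraph.fromEdgeSet_adj, ← Sym2.map_mk]
  constructor
  · rintro ⟨h | ⟨x, hx⟩, -⟩
    · rwa [hinj.mem_set_image] at h
    · have hx : s(x.1, hang hkl v (f x)) = s(Fin.castLE hkl.le i, Fin.castLE hkl.le j) := hx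
      have : x.1 ∈ s(Fin.castLE hkl.le i, Fin.castLE hkl.le j) := hx ▸ Sym2.mem_mk_left _ _
      rcases Sym2.mem_iff.1 this with h | h
      · exact absurd (by rw [h]; exact i.2) x.2
      · exact absurd (by rw [h]; exact j.2) x.2
  · intro h
    exact ⟨Or.inl ⟨_, h, rfl⟩, fun e => h.ne (Fin.castLE_injective _ e)⟩

theorem superGraph_adj_new (hf : IsRootedForest f) (x : {x : Fin l // ¬ (x : ℕ) < k}) (b : Fin l) :
    (superGraph hkl T v f).Adj x b ↔
      b = hang hkl v (f x) ∨ ∃ y : {x : Fin l // ¬ (x : ℕ) < k}, b = y ∧ x = hang hkl v (f y) := by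
  rw [superGraph, SimpleGraph.fromEdgeSet_adj]
  constructor
  · rintro ⟨⟨e, -, he⟩ | ⟨y, hy⟩, -⟩
    · have : x.1 ∈ Sym2.map (Fin.castLE hkl.le) e := he ▸ Sym2.mem_mk_left _ _
      obtain ⟨i, -, hi⟩ := Sym2.mem_map.1 this
      exact absurd (by rw [← hi]; exact i.2) x.2
    · rcases Sym2.eq_iff.1 hy with ⟨h1, h2⟩ | ⟨h1, h2⟩
      · obtain rfl := Subtype.ext h1
        exact Or.inl h2.symm
      · exact Or.inr ⟨y, h1.symm, h2.symm⟩
  · rintro (rfl | ⟨y, rfl, hy⟩)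
    · exact ⟨Or.inr ⟨x, rfl⟩, hang_ne hkl v f hf x⟩
    · exact ⟨Or.inr ⟨y, by rw [Sym2.eq_swap, hy]⟩, hy ▸ (hang_ne hkl v f hf y).symm⟩

theorem superGraph_adj_cross (hf : IsRootedForest f) (a : Fin k)
    (x : {x : Fin l // ¬ (x : ℕ) < k}) :
    (superGraph hkl T v f).Adj (Fin.castLE hkl.le a) x ↔ a = v ∧ f x = Sum.inr () := by
  rw [SimpleGraph.adj_comm, superGraph_adj_new hkl T v f hf]
  constructor
  · rintro (h | ⟨y, hy, -⟩)
    · rcases hx : f x with y | y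
      · rw [hx] at h
        exact absurd (by rw [← show Fin.castLE hkl.le a = y.1 from h]; exact a.2) y.2
      · rw [hx] at h
        exact ⟨Fin.castLE_injective _ h, rfl⟩
    · exact absurd (by rw [← hy]; exact a.2) y.2
  · rintro ⟨rfl, h⟩
    exact Or.inl (by rw [h]; rfl)

theorem superGraph_connected (hT : T.IsTree) (hf : IsRootedForest f) :
    (superGraph hkl T v f).Connected := by
  set G := superGraph hkl T v f with hG
  let φ : T →g G := ⟨Fin.castLE hkl.le, fun {i j} h => (superGraph_adj_old hkl T v f i j).2 h⟩
  have hold : ∀ i : Fin k, G.Reachable (Fin.castLE hkl.le i) (Fin.castLE hkl.le v) := fun i =>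
    (hT.connected i v).map φ
  obtain ⟨h, hh⟩ := id hf
  have hnew : ∀ n, ∀ x : {x : Fin l // ¬ (x : ℕ) < k}, h x = n →
      G.Reachable x (Fin.castLE hkl.le v) := by
    intro n
    induction n using Nat.strong_induction_on with
    | _ n ih =>
    rintro x rfl
    have hadj : G.Adj x (hang hkl v (f x)) := (superGraph_adj_new hkl T v f hf x _).2 (Or.inl rfl)
    refine hadj.reachable.trans ?_
    rcases hx : f x with y | y
    · exact ih _ (hh _ _ hx) y rfl
    · exact SimpleGraph.Reachable.refl _
  have hall : ∀ a, G.Reachable a (Fin.castLE hkl.le v) := by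
    intro a
    by_cases ha : (a : ℕ) < k
    · exact hold ⟨a, ha⟩
    · exact hnew _ ⟨a, ha⟩ rfl
  have : Nonempty (Fin l) := ⟨Fin.castLE hkl.le v⟩
  exact ⟨fun a b => (hall a).trans (hall b).symm⟩

/-- The graph is connected and has at most `(k - 1) + (l - k)` edges. -/
theorem superGraph_isTree (hT : T.IsTree) (hf : IsRootedForest f) :
    (superGraph hkl T v f).IsTree := by
  have hc := superGraph_connected hkl T v f hT hf
  rw [SimpleGraph.isTree_iff_connected_and_card]
  refine ⟨hc, le_antisymm ?_ hc.card_vert_le_card_edgeSet_add_one⟩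
  have hTc := (SimpleGraph.isTree_iff_connected_and_card.1 hT).2
  have hW : Nat.card {x : Fin l // ¬ (x : ℕ) < k} = l - k := by
    rw [Nat.card_eq_fintype_card, card_new hkl]
  have h1 : (superGraph hkl T v f).edgeSet.ncard ≤
      (Sym2.map (Fin.castLE hkl.le) '' T.edgeSet ∪
        Set.range fun x => s(x.1, hang hkl v (f x))).ncard := by
    refine Set.ncard_le_ncard ?_ (Set.toFinite _)
    rw [superGraph, SimpleGraph.edgeSet_fromEdgeSet]
    exact Set.sdiff_subset
  have h2 := Set.ncard_union_le (Sym2.map (Fin.castLE hkl.le) '' T.edgeSet)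
    (Set.range fun x => s(x.1, hang hkl v (f x)))
  have h3 := Set.ncard_image_le (f := Sym2.map (Fin.castLE hkl.le)) (Set.toFinite T.edgeSet)
  have h4 := Set.ncard_image_le (f := fun x => s(x.1, hang hkl v (f x))) (Set.toFinite Set.univ)
  rw [Set.image_univ, Set.ncard_univ, hW] at h4
  simp only [Nat.card_coe_set_eq, Nat.card_fin] at hTc ⊢
  omega

/-- If `f x ≠ g x`, then the edge from `x` to its `f`-parent `y` is the edge from `y` to its
`g`-parent `x`, so that `f` and `g` also differ at `y`, which has smaller rank for `f`. -/
theorem superGraph_injective {f g} (hf : IsRootedForest f) (hg : IsRootedForest g)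
    (h : superGraph hkl T v f = superGraph hkl T v g) : f = g := by
  obtain ⟨r, hr⟩ := id hf
  have hinj : Function.Injective (hang hkl v) := by
    rintro (a | a) (b | b) hab
    · exact congrArg _ (Subtype.ext hab)
    · exact absurd (by rw [show a.1 = Fin.castLE hkl.le v from hab]; exact v.2) a.2
    · exact absurd (by rw [← show Fin.castLE hkl.le v = b.1 from hab]; exact v.2) b.2
    · rfl
  have key : ∀ n, ∀ x, r x = n → f x = g x := by
    intro n
    induction n using Nat.strong_induction_on with
    | _ n ih =>
    rintro x rfl
    have hadj := (superGraph_adj_new hkl T v f hf x _).2 (Or.inl rfl)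
    rw [h, superGraph_adj_new hkl T v g hg] at hadj
    rcases hadj with h1 | ⟨y, hy, hx⟩
    · exact hinj h1
    · have hfx : f x = Sum.inl y := hinj hy
      have hgy : g y = Sum.inl x := hinj hx.symm
      have hlt := hr _ _ hfx
      have := ih _ hlt y rfl
      exact absurd (hr _ _ (this.trans hgy)) hlt.not_gt
  exact funext fun x => key _ x rfl

/-- The parent of a new vertex is taken to be a neighbour closer to `v`. The resulting graph is a
connected subgraph of the tree `G`, hence equal to it. -/
theorem superGraph_surjective (hT : T.IsTree) (G : SimpleGraph (Fin l)) (hG : G.IsTree)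
    (hold : ∀ i j : Fin k, G.Adj (Fin.castLE hkl.le i) (Fin.castLE hkl.le j) ↔ T.Adj i j)
    (hcross : ∀ a b : Fin l, (a : ℕ) < k → ¬ (b : ℕ) < k → G.Adj a b → a = Fin.castLE hkl.le v) :
    ∃ f, IsRootedForest f ∧ superGraph hkl T v f = G := by
  have step : ∀ x : {x : Fin l // ¬ (x : ℕ) < k}, ∃ z, G.Adj x (hang hkl v z) ∧
      G.dist (hang hkl v z) (Fin.castLE hkl.le v) < G.dist x (Fin.castLE hkl.le v) := by
    intro x
    obtain ⟨p, hp⟩ := hG.connected.exists_walk_length_eq_dist x.1 (Fin.castLE hkl.le v)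
    generalize hw : x.1 = w at p hp ⊢
    cases p with
    | nil => exact absurd (by rw [hw]; exact v.2) x.2
    | @cons _ y _ hadj p =>
    subst hw
    have hlt : G.dist y (Fin.castLE hkl.le v) < G.dist x (Fin.castLE hkl.le v) := by
      rw [← hp, SimpleGraph.Walk.length_cons]
      exact Nat.lt_succ_of_le (SimpleGraph.dist_le p)
    by_cases hy : (y : ℕ) < k
    · obtain rfl := hcross y x hy x.2 hadj.symm
      exact ⟨Sum.inr (), hadj, hlt⟩
    · exact ⟨Sum.inl ⟨y, hy⟩, hadj, hlt⟩
  choose f hadj hlt using step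
  have hf : IsRootedForest f := ⟨fun x => G.dist x (Fin.castLE hkl.le v), fun x y hxy => by
    have := hlt x
    rwa [hxy] at this⟩
  refine ⟨f, hf, ?_⟩
  have hle : superGraph hkl T v f ≤ G := by
    rw [superGraph, SimpleGraph.fromEdgeSet_le]
    rintro e ⟨⟨e, he, rfl⟩ | ⟨x, rfl⟩, -⟩
    · induction e with
      | _ i j => exact (hold i j).2 he
    · exact hadj x
  exact le_antisymm hle ((SimpleGraph.isTree_iff_minimal_connected.1 hG).2
    (superGraph_connected hkl T v f hT hf) hle)

theorem unique_cross_iff (hf : IsRootedForest f) :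
    (∃! b : Fin l, ¬ (b : ℕ) < k ∧ (superGraph hkl T v f).Adj (Fin.castLE hkl.le v) b) ↔
      (rootLayer f).card = 1 := by
  have hmem : ∀ x, x ∈ rootLayer f ↔ (superGraph hkl T v f).Adj (Fin.castLE hkl.le v) x := by
    intro x
    rw [mem_rootLayer, superGraph_adj_cross hkl T v f hf]
    exact ⟨fun ⟨_, h⟩ => ⟨rfl, h⟩, fun h => ⟨_, h.2⟩⟩
  rw [card_eq_one]
  constructor
  · rintro ⟨b, ⟨hb, hadj⟩, huniq⟩
    refine ⟨⟨b, hb⟩, ?_⟩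
    ext x
    rw [hmem, mem_singleton]
    exact ⟨fun h => Subtype.ext (huniq x ⟨x.2, h⟩), by rintro rfl; exact hadj⟩
  · rintro ⟨b, hb⟩
    refine ⟨b, ⟨b.2, (hmem b).1 (by simp [hb])⟩, ?_⟩
    rintro y ⟨hy, hadj⟩
    have := (hmem ⟨y, hy⟩).2 hadj
    rw [hb, mem_singleton] at this
    exact congrArg Subtype.val this
end

/-- For `1 ≤ k < ℓ`, a labelled tree `T` on `{1,…,k}` and `v ∈ {1,…,k}`:
the number of labelled trees `T'` on `{1,…,ℓ}` such that the subgraph of `T'` induced by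
`{1,…,k}` equals `T`, exactly one edge of `T'` joins `{1,…,k}` to `{k+1,…,ℓ}`, and that
edge is incident to `v`, equals `(ℓ-k)^{ℓ-k-1}`. -/
theorem count_supertrees (k l : ℕ) (hk : 1 ≤ k) (hkl : k < l)
    (T : SimpleGraph (Fin k)) (hT : T.IsTree) (v : Fin k) :
    Nat.card {T' : SimpleGraph (Fin l) //
      T'.IsTree ∧
      (∀ i j : Fin k, T'.Adj (Fin.castLE hkl.le i) (Fin.castLE hkl.le j) ↔ T.Adj i j) ∧
      (∀ a b : Fin l, (a : ℕ) < k → ¬ (b : ℕ) < k → T'.Adj a b → a = Fin.castLE hkl.le v) ∧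
      (∃! b : Fin l, ¬ (b : ℕ) < k ∧ T'.Adj (Fin.castLE hkl.le v) b)} =
    (l - k) ^ (l - k - 1) := by
  have : Nonempty {x : Fin l // ¬ (x : ℕ) < k} := ⟨⟨⟨k, hkl⟩, lt_irrefl k⟩⟩
  rw [← card_new hkl, ← card_forest_one_root]
  symm
  refine Nat.card_congr (Equiv.ofBijective (fun f => ⟨superGraph hkl T v f.1,
    superGraph_isTree hkl T v f.1 hT f.2.1, superGraph_adj_old hkl T v f.1,
    fun a b ha hb hab => ?_, (unique_cross_iff hkl T v f.1 f.2.1).2 f.2.2⟩) ⟨?_, ?_⟩)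
  · have := (superGraph_adj_cross hkl T v f.1 f.2.1 ⟨a, ha⟩ ⟨b, hb⟩).1 hab
    rw [← this.1]
    rfl
  · intro f g h
    exact Subtype.ext (superGraph_injective hkl T v f.2.1 g.2.1 (congrArg Subtype.val h))
  · rintro ⟨G, hG, hold, hcross, huniq⟩
    obtain ⟨f, hf, rfl⟩ := superGraph_surjective hkl T v hT G hG hold hcross
    exact ⟨⟨f, hf, (unique_cross_iff hkl T v f hf).1 huniq⟩, rfl⟩
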